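/- arXiv:2011.05835 — 2 statements merged into one kernel-verified Lean document; each statement's English description precedes it below -/
import Mathlib

section
/- Let X = ℓ∞³, Y = ℓ₁³, and let T : X → Y be a bounded linear operator with ‖T‖ = 1 such that M_T ∩ Ext(B_X) = {±x₁, ±x₂, ±x₃, ±x₄}. Suppose |S₁| = 2, |S₂| = 6 and |S₃| = 0. If the intersection ∩_{x_k ∈ S₂} ±J(Tx_k) has at least 2 elements and ±J(Tx_i) ⊆ ±Ext J(Tx_k) for all x_i ∈ S₁ and all x_k ∈ S₂, then T is 6-smooth, i.e., dim span J(T) = 6. -/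
open Metric Set Module Pointwise

noncomputable section

/-- `J x` is the set of supporting functionals of `x`. -/
def suppFunctionals {E : Type*} [NormedAddCommGroup E] [NormedSpace ℝ E] (x : E) :
    Set (E →L[ℝ] ℝ) := {f | ‖f‖ = 1 ∧ f x = 1}

/-- ℓ∞³ : ℝ³ with the max norm. -/
abbrev Linf3 := Fin 3 → ℝ

/-- ℓ₁³ : ℝ³ with the ℓ¹ norm. -/
abbrev L13 := PiLp 1 (fun _ : Fin 3 => ℝ)

def x₁ : Linf3 := ![1, 1, 1]
def x₂ : Linf3 := ![-1, 1, 1]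
def x₃ : Linf3 := ![-1, -1, 1]
def x₄ : Linf3 := ![1, -1, 1]

/-- `M_T ∩ Ext(B_X)`: the norm-attainment set of `T` intersected with the
extreme points of the closed unit ball. -/
def MTExt (T : Linf3 →L[ℝ] L13) : Set Linf3 :=
  {x ∈ sphere (0 : Linf3) 1 | ‖T x‖ = ‖T‖} ∩ extremePoints ℝ (closedBall (0 : Linf3) 1)

/-- `Sk T k` is the set `S_k` of points `x` of `M_T ∩ Ext(B_X)` such that `T x` is
`k`-smooth. -/
def Sk (T : Linf3 →L[ℝ] L13) (k : ℕ) : Set Linf3 :=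
  {x ∈ MTExt T | finrank ℝ (Submodule.span ℝ (suppFunctionals (T x))) = k}

/-- `±A`, i.e. `A ∪ (-A)`. -/
def pm {E : Type*} [NormedAddCommGroup E] [NormedSpace ℝ E] (A : Set (E →L[ℝ] ℝ)) :
    Set (E →L[ℝ] ℝ) := A ∪ (-A)

/-!
The norm of `X →L[ℝ] Y` is the supremum of the compact family of functionals `S ↦ g (S x)` with
`‖x‖ ≤ 1` and `‖g‖ ≤ 1`. A first-order expansion of `‖T + t • S‖` at `t = 0` shows that `J(T)` lies
in the span of the members of the family attaining the value `1` at `T`, and the Krein–Milman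
theorem lets `x` run over the extreme points of the ball alone. If every norm-attaining extreme
point `x = ∑ cᵢ bᵢ` satisfies `J(T x) ⊆ span J(T bᵢ)` whenever `cᵢ ≠ 0`, then the basis vectors `bᵢ`
already contribute everything, and they contribute independently of one another. Here the `2`-smooth
vertices, one from each antipodal pair, form a basis, and the remaining pair brings in nothing new.
-/

section NormingSets

variable {E : Type*} [NormedAddCommGroup E] [NormedSpace ℝ E]

lemma exists_pos_forall_add_mul_le {α : Type*} [TopologicalSpace α] {K : Set α}
    (hK : IsCompact K) {φ ψ : α → ℝ} (hφ : Continuous φ) (hψ : Continuous ψ) {c ε : ℝ}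
    (hφc : ∀ x ∈ K, φ x ≤ c) (hψε : ∀ x ∈ K, φ x = c → ψ x < ε) :
    ∃ t > 0, ∀ x ∈ K, φ x + t * ψ x ≤ c + t * ε := by
  have hgap : ∀ x ∈ K ∩ {x | ε ≤ ψ x}, 0 < c - φ x := fun x hx ↦
    sub_pos.mpr <| (hφc x hx.1).lt_of_ne fun h ↦ (hψε x hx.1 h).not_ge hx.2
  have hratio : ContinuousOn (fun x ↦ (ψ x - ε) / (c - φ x)) (K ∩ {x | ε ≤ ψ x}) :=
    (hψ.sub continuous_const).continuousOn.div (continuous_const.sub hφ).continuousOn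
      fun x hx ↦ (hgap x hx).ne'
  obtain ⟨M, hM⟩ :=
    (hK.inter_right (isClosed_le continuous_const hψ)).bddAbove_image hratio
  have hpos : 0 < max M 1 := lt_max_of_lt_right one_pos
  refine ⟨(max M 1)⁻¹, inv_pos.mpr hpos, fun x hx ↦ ?_⟩
  suffices (max M 1)⁻¹ * (ψ x - ε) ≤ c - φ x by linarith
  rw [inv_mul_le_iff₀ hpos]
  by_cases hxε : ε ≤ ψ x
  · have hxgap := hgap x ⟨hx, hxε⟩
    exact (div_le_iff₀ hxgap).mp <| (hM (mem_image_of_mem _ ⟨hx, hxε⟩)).trans (le_max_left M 1)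
  · nlinarith [hφc x hx]

lemma apply_nonpos_of_mem_suppFunctionals {K : Set (E →L[ℝ] ℝ)} (hK : IsCompact K)
    (hnorm : ∀ x, IsLUB ((fun g ↦ g x) '' K) ‖x‖) {x y : E} (hx : ‖x‖ = 1)
    (hy : ∀ g ∈ K, g x = 1 → g y ≤ 0) {f : E →L[ℝ] ℝ} (hf : f ∈ suppFunctionals x) :
    f y ≤ 0 := by
  refine le_of_forall_pos_le_add fun ε hε ↦ ?_
  obtain ⟨t, ht, hle⟩ := exists_pos_forall_add_mul_le hK
    (φ := fun g ↦ g x) (ψ := fun g ↦ g y) (c := 1) (ε := ε) (by fun_prop) (by fun_prop)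
    (fun g hg ↦ hx ▸ (hnorm x).1 (mem_image_of_mem _ hg))
    (fun g hg hgx ↦ (hy g hg hgx).trans_lt hε)
  have hxy : ‖x + t • y‖ ≤ 1 + t * ε :=
    (hnorm _).2 <| forall_mem_image.mpr fun g hg ↦ by simpa using hle g hg
  have hfxy : 1 + t * f y ≤ 1 + t * ε := calc
    1 + t * f y = f (x + t • y) := by simp [hf.2]
    _ ≤ ‖f (x + t • y)‖ := Real.le_norm_self _
    _ ≤ ‖x + t • y‖ := by simpa [hf.1] using f.le_opNorm (x + t • y)
    _ ≤ 1 + t * ε := hxy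
  rw [zero_add]
  exact le_of_mul_le_mul_left (by linarith) ht

variable [FiniteDimensional ℝ E]

lemma mem_of_forall_apply_eq_zero {W : Submodule ℝ (E →L[ℝ] ℝ)} {f : E →L[ℝ] ℝ}
    (h : ∀ x, (∀ g ∈ W, g x = 0) → f x = 0) : f ∈ W := by
  by_contra hf
  obtain ⟨φ, hφf, hφW⟩ := Submodule.exists_le_ker_of_notMem hf
  set x := (evalEquiv ℝ E).symm (φ ∘ₗ LinearMap.toContinuousLinearMap.toLinearMap)
  have hφ (g : E →L[ℝ] ℝ) : g x = φ g := apply_evalEquiv_symm_apply ℝ E g.toLinearMap _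
  exact hφf <| hφ f ▸ h x fun g hg ↦ (hφ g).trans (hφW hg)

lemma suppFunctionals_subset_span_of_isLUB {K : Set (E →L[ℝ] ℝ)} (hK : IsCompact K)
    (hnorm : ∀ x, IsLUB ((fun g ↦ g x) '' K) ‖x‖) {x : E} (hx : ‖x‖ = 1) :
    suppFunctionals x ⊆ Submodule.span ℝ {g ∈ K | g x = 1} := by
  refine fun f hf ↦ mem_of_forall_apply_eq_zero fun y hy ↦ ?_
  have hzero : ∀ g ∈ K, g x = 1 → g y = 0 := fun g hg hgx ↦
    hy g (Submodule.subset_span ⟨hg, hgx⟩)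
  refine le_antisymm
    (apply_nonpos_of_mem_suppFunctionals hK hnorm hx (fun g hg hgx ↦ (hzero g hg hgx).le) hf) ?_
  have hneg : f (-y) ≤ 0 := apply_nonpos_of_mem_suppFunctionals hK hnorm hx
    (fun g hg hgx ↦ by simp [hzero g hg hgx]) hf
  simpa using hneg

lemma toExposed_subset_span_extremePoints {C : Set E} (hC : IsCompact C) (hconv : Convex ℝ C)
    (f : E →L[ℝ] ℝ) :
    f.toExposed C ⊆ Submodule.span ℝ (f.toExposed C ∩ extremePoints ℝ C) := by
  have hexp : IsExposed ℝ C (f.toExposed C) := ContinuousLinearMap.toExposed.isExposed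
  have hsub : extremePoints ℝ (f.toExposed C) ⊆ f.toExposed C ∩ extremePoints ℝ C :=
    subset_inter extremePoints_subset hexp.isExtreme.extremePoints_subset_extremePoints
  calc f.toExposed C
      = closure (convexHull ℝ (extremePoints ℝ (f.toExposed C))) :=
        (closure_convexHull_extremePoints (hexp.isCompact hC) (hexp.convex hconv)).symm
    _ ⊆ Submodule.span ℝ (f.toExposed C ∩ extremePoints ℝ C) :=
        closure_minimal
          (convexHull_min (hsub.trans Submodule.subset_span) (Submodule.convex _))
          (Submodule.closed_of_finiteDimensional _)

end NormingSets

section SupportingFunctionals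

variable {E : Type*} [NormedAddCommGroup E] [NormedSpace ℝ E]

/-- The order of smoothness of `y`: a unit vector `y` is `k`-smooth when `smoothOrder y = k`. -/
def smoothOrder (y : E) : ℕ := finrank ℝ (Submodule.span ℝ (suppFunctionals y))

lemma suppFunctionals_neg (y : E) : suppFunctionals (-y) = -suppFunctionals y := by
  ext f
  simp [suppFunctionals]

lemma span_suppFunctionals_neg (y : E) :
    Submodule.span ℝ (suppFunctionals (-y)) = Submodule.span ℝ (suppFunctionals y) := by
  rw [suppFunctionals_neg, Submodule.span_neg]

lemma mem_suppFunctionals_of_norm_le {f : E →L[ℝ] ℝ} {y : E} (hf : ‖f‖ ≤ 1) (hy : ‖y‖ ≤ 1)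
    (hfy : 1 ≤ f y) : f ∈ suppFunctionals y := by
  have hle : f y ≤ ‖f‖ * ‖y‖ := (Real.le_norm_self _).trans (f.le_opNorm y)
  constructor <;> nlinarith [norm_nonneg f, norm_nonneg y]

lemma subset_span_of_pm_subset_pm_extremePoints {A B : Set (E →L[ℝ] ℝ)}
    (h : pm A ⊆ pm (extremePoints ℝ B)) : A ⊆ Submodule.span ℝ B := by
  intro g hg
  rcases h (Or.inl hg) with hB | hB
  · exact Submodule.subset_span hB.1
  · exact neg_mem_iff.mp (Submodule.subset_span hB.1)

end SupportingFunctionals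

section Operators

variable {X Y : Type*} [NormedAddCommGroup X] [NormedSpace ℝ X]
  [NormedAddCommGroup Y] [NormedSpace ℝ Y]

/-- The elementary tensor `g ⊗ x`, viewed as the functional `S ↦ g (S x)` on `X →L[ℝ] Y`. -/
def tensorFunctional : X →L[ℝ] (Y →L[ℝ] ℝ) →L[ℝ] (X →L[ℝ] Y) →L[ℝ] ℝ :=
  (ContinuousLinearMap.compL ℝ (X →L[ℝ] Y) Y ℝ).flip ∘L ContinuousLinearMap.apply ℝ Y

lemma tensorFunctional_apply (x : X) (g : Y →L[ℝ] ℝ) (S : X →L[ℝ] Y) :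
    tensorFunctional x g S = g (S x) := rfl

lemma norm_tensorFunctional_le (x : X) (g : Y →L[ℝ] ℝ) :
    ‖tensorFunctional x g‖ ≤ ‖x‖ * ‖g‖ := by
  refine ContinuousLinearMap.opNorm_le_bound _ (by positivity) fun S ↦ ?_
  calc ‖g (S x)‖ ≤ ‖g‖ * (‖S‖ * ‖x‖) := g.le_opNorm_of_le (S.le_opNorm x)
    _ = ‖x‖ * ‖g‖ * ‖S‖ := by ring

/-- The set `M_T ∩ Ext(B_X)` of norm-attaining extreme points of the unit ball, as `MTExt` but for
arbitrary spaces. -/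
def attainingExtremePoints (T : X →L[ℝ] Y) : Set X :=
  {x ∈ sphere (0 : X) 1 | ‖T x‖ = ‖T‖} ∩ extremePoints ℝ (closedBall (0 : X) 1)

/-- The set `S_k` of points `x ∈ M_T ∩ Ext(B_X)` with `T x` `k`-smooth, as `Sk` but for arbitrary
spaces. -/
def smoothAttainingPoints (T : X →L[ℝ] Y) (k : ℕ) : Set X :=
  {x ∈ attainingExtremePoints T | smoothOrder (T x) = k}

variable {T : X →L[ℝ] Y}

lemma neg_mem_attainingExtremePoints {x : X} (hx : x ∈ attainingExtremePoints T) :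
    -x ∈ attainingExtremePoints T := by
  refine ⟨⟨by simpa using hx.1.1, by simpa using hx.1.2⟩, ?_⟩
  have himage := image_extremePoints (𝕜 := ℝ) (LinearEquiv.neg ℝ (M := X)) (closedBall 0 1)
  have hball : LinearEquiv.neg ℝ '' closedBall (0 : X) 1 = closedBall 0 1 :=
    (LinearIsometryEquiv.neg ℝ (E := X)).image_closedBall 0 1 |>.trans (by simp)
  rw [hball] at himage
  exact himage ▸ mem_image_of_mem _ hx.2

lemma neg_mem_smoothAttainingPoints {k : ℕ} {x : X} (hx : x ∈ smoothAttainingPoints T k) :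
    -x ∈ smoothAttainingPoints T k := by
  refine ⟨neg_mem_attainingExtremePoints hx.1, ?_⟩
  rw [map_neg, smoothOrder, span_suppFunctionals_neg]
  exact hx.2

lemma disjoint_smoothAttainingPoints {k l : ℕ} (hkl : k ≠ l) :
    Disjoint (smoothAttainingPoints T k) (smoothAttainingPoints T l) :=
  disjoint_left.mpr fun _ hk hl ↦ hkl (hk.2.symm.trans hl.2)

lemma isLUB_tensorFunctional_apply (S : X →L[ℝ] Y) :
    IsLUB ((fun F : (X →L[ℝ] Y) →L[ℝ] ℝ ↦ F S) ''
      image2 (fun x g ↦ tensorFunctional x g) (closedBall 0 1) (closedBall 0 1)) ‖S‖ := by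
  simp only [IsLUB, IsLeast, upperBounds, lowerBounds, forall_mem_image, forall_mem_image2,
    mem_ofPred_eq, mem_closedBall_zero_iff, tensorFunctional_apply]
  refine ⟨fun x hx g hg ↦ ?_, fun u hu ↦ ?_⟩
  · calc g (S x) ≤ ‖g (S x)‖ := Real.le_norm_self _
      _ ≤ 1 * (‖S‖ * 1) := g.le_of_opNorm_le_of_le hg (S.le_opNorm_of_le hx)
      _ = ‖S‖ := by ring
  · have hu₀ : 0 ≤ u := by simpa using hu 0 (by simp) 0 (by simp)
    refine S.opNorm_le_of_unit_norm hu₀ fun x hx ↦ ?_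
    obtain ⟨g, hg, hgx⟩ := exists_dual_vector'' ℝ (S x)
    exact hgx.symm.trans_le (hu x hx.le g hg)

lemma tensorFunctional_mem_suppFunctionals (hT : ‖T‖ = 1) {x : X} (hx : ‖x‖ ≤ 1)
    {g : Y →L[ℝ] ℝ} (hg : g ∈ suppFunctionals (T x)) :
    tensorFunctional x g ∈ suppFunctionals T :=
  mem_suppFunctionals_of_norm_le
    ((norm_tensorFunctional_le x g).trans (by simpa [hg.1] using hx)) hT.le hg.2.ge

variable [FiniteDimensional ℝ X]

lemma tensorFunctional_mem_span_extremePoints (hT : ‖T‖ = 1) {x : X} (hx : ‖x‖ ≤ 1)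
    {g : Y →L[ℝ] ℝ} (hg : g ∈ suppFunctionals (T x)) :
    tensorFunctional x g ∈ Submodule.span ℝ
      (⋃ e ∈ attainingExtremePoints T, tensorFunctional e '' suppFunctionals (T e)) := by
  have hT_le (e : X) (he : ‖e‖ ≤ 1) : ‖T e‖ ≤ 1 := by simpa [hT] using T.le_opNorm_of_le he
  have hgT_le (e : X) (he : ‖e‖ ≤ 1) : g (T e) ≤ 1 :=
    (Real.le_norm_self _).trans <| by simpa [hg.1] using g.le_opNorm_of_le (hT_le e he)
  have hx_face : x ∈ (g ∘L T).toExposed (closedBall 0 1) :=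
    ⟨by simpa using hx, fun e he ↦ (hgT_le e (by simpa using he)).trans_eq hg.2.symm⟩
  have hx_span := toExposed_subset_span_extremePoints (isCompact_closedBall 0 1)
    (convex_closedBall 0 1) (g ∘L T) hx_face
  refine Submodule.span_induction (p := fun e _ ↦ tensorFunctional e g ∈ _) ?_ (by simp)
    (fun _ _ _ _ h h' ↦ by simpa using add_mem h h')
    (fun c _ _ h ↦ by simpa using Submodule.smul_mem _ c h) hx_span
  rintro e ⟨⟨he_ball, he_max⟩, he_ext⟩
  have he : ‖e‖ ≤ 1 := by simpa using he_ball
  have hge : g ∈ suppFunctionals (T e) :=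
    mem_suppFunctionals_of_norm_le hg.1.le (hT_le e he) (hg.2.symm.trans_le (he_max x hx_face.1))
  have hTe : ‖T e‖ = 1 := (hT_le e he).antisymm <| by
    simpa [hge.1, hge.2] using g.le_opNorm (T e)
  have he_norm : ‖e‖ = 1 := he.antisymm <| by simpa [hTe, hT] using T.le_opNorm e
  exact Submodule.subset_span <| mem_biUnion
    ⟨⟨by simpa using he_norm, hTe.trans hT.symm⟩, he_ext⟩ (mem_image_of_mem _ hge)

variable [FiniteDimensional ℝ Y]

theorem span_suppFunctionals_eq_span_tensorFunctional (hT : ‖T‖ = 1) :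
    Submodule.span ℝ (suppFunctionals T) = Submodule.span ℝ
      (⋃ e ∈ attainingExtremePoints T, tensorFunctional e '' suppFunctionals (T e)) := by
  apply le_antisymm
  · have hcompact : IsCompact (image2 (fun (x : X) (g : Y →L[ℝ] ℝ) ↦ tensorFunctional x g)
        (closedBall 0 1) (closedBall 0 1)) :=
      (image_prod _).symm ▸
        ((isCompact_closedBall 0 1).prod (isCompact_closedBall 0 1)).image
          ((tensorFunctional.continuous.comp continuous_fst).clm_apply continuous_snd)
    refine Submodule.span_le.mpr <|
      (suppFunctionals_subset_span_of_isLUB hcompact isLUB_tensorFunctional_apply hT).trans <|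
        Submodule.span_le.mpr ?_
    rintro _ ⟨⟨x, hx, g, hg, rfl⟩, hgx⟩
    rw [mem_closedBall_zero_iff] at hx hg
    exact tensorFunctional_mem_span_extremePoints hT hx <| mem_suppFunctionals_of_norm_le hg
      (by simpa [hT] using T.le_opNorm_of_le hx) hgx.ge
  · refine Submodule.span_mono <| iUnion₂_subset fun e he ↦ image_subset_iff.mpr fun g hg ↦ ?_
    exact tensorFunctional_mem_suppFunctionals hT (mem_sphere_zero_iff_norm.mp he.1.1).le hg

end Operators

section Basis

variable {X Y ι : Type*} [NormedAddCommGroup X] [NormedSpace ℝ X] [FiniteDimensional ℝ X]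
  [NormedAddCommGroup Y] [NormedSpace ℝ Y]

lemma range_lsum_eq_iSup_range {R N : Type*} {M : ι → Type*} [Fintype ι] [DecidableEq ι]
    [CommSemiring R] [∀ i, AddCommMonoid (M i)] [∀ i, Module R (M i)] [AddCommMonoid N] [Module R N]
    (f : ∀ i, M i →ₗ[R] N) :
    LinearMap.range (LinearMap.lsum R M R f) = ⨆ i, LinearMap.range (f i) := by
  rw [LinearMap.range_eq_map, ← LinearMap.iSup_range_single, Submodule.map_iSup]
  exact iSup_congr fun i ↦ by
    rw [← LinearMap.range_comp]
    exact congrArg LinearMap.range (LinearMap.ext (LinearMap.lsum_piSingle R M R f i))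

lemma injective_lsum_tensorFunctional [Fintype ι] [DecidableEq ι] (b : Basis ι ℝ X)
    (V : ι → Submodule ℝ (Y →L[ℝ] ℝ)) :
    Function.Injective (LinearMap.lsum ℝ (fun i ↦ V i) ℝ
      fun i ↦ (tensorFunctional (b i)).toLinearMap ∘ₗ (V i).subtype) := by
  refine (injective_iff_map_eq_zero _).mpr fun g hg ↦ ?_
  ext i y
  have hS := DFunLike.congr_fun hg
    ((LinearMap.toContinuousLinearMap (b.coord i)).smulRight y)
  simpa [tensorFunctional_apply, Finsupp.single_apply, apply_ite] using hS

lemma finrank_iSup_map_tensorFunctional [Fintype ι] [FiniteDimensional ℝ Y]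
    (b : Basis ι ℝ X) (V : ι → Submodule ℝ (Y →L[ℝ] ℝ)) :
    finrank ℝ ↥(⨆ i, (V i).map (tensorFunctional (b i)).toLinearMap) =
      ∑ i, finrank ℝ (V i) := by
  classical
  have hrange := range_lsum_eq_iSup_range
    fun i ↦ (tensorFunctional (b i)).toLinearMap ∘ₗ (V i).subtype
  simp only [LinearMap.range_comp, Submodule.range_subtype] at hrange
  have (i : ι) : Free ℝ (V i) := Free.of_divisionRing ℝ (V i)
  rw [← hrange, LinearMap.finrank_range_of_inj (injective_lsum_tensorFunctional b V),
    finrank_pi_fintype]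

variable [FiniteDimensional ℝ Y] {T : X →L[ℝ] Y}

lemma span_suppFunctionals_eq_iSup_map_tensorFunctional [Finite ι] (hT : ‖T‖ = 1)
    (b : Basis ι ℝ X) (hb : ∀ i, b i ∈ attainingExtremePoints T)
    (hJ : ∀ e ∈ attainingExtremePoints T, ∀ i, b.repr e i ≠ 0 →
      suppFunctionals (T e) ⊆ Submodule.span ℝ (suppFunctionals (T (b i)))) :
    Submodule.span ℝ (suppFunctionals T) =
      ⨆ i, (Submodule.span ℝ (suppFunctionals (T (b i)))).map
        (tensorFunctional (b i)).toLinearMap := by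
  cases nonempty_fintype ι
  rw [span_suppFunctionals_eq_span_tensorFunctional hT]
  apply le_antisymm
  · refine Submodule.span_le.mpr <| iUnion₂_subset fun e he ↦ image_subset_iff.mpr fun g hg ↦ ?_
    have hexpand : tensorFunctional e g = ∑ i, b.repr e i • tensorFunctional (b i) g := by
      simpa only [map_sum, map_smul, sum_apply, smul_apply]
        using congrArg (tensorFunctional · g) (b.sum_repr e).symm
    rw [mem_preimage, hexpand]
    refine Submodule.sum_mem _ fun i _ ↦ ?_
    by_cases hi : b.repr e i = 0
    · simp [hi]
    · exact Submodule.smul_mem _ _ <| Submodule.mem_iSup_of_mem i <|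
        Submodule.mem_map_of_mem (hJ e he i hi hg)
  · refine iSup_le fun i ↦ ?_
    rw [Submodule.map_span]
    exact Submodule.span_mono <| subset_iUnion₂_of_subset (b i) (hb i) subset_rfl

theorem smoothOrder_eq_sum_of_basis [Fintype ι] (hT : ‖T‖ = 1) (b : Basis ι ℝ X)
    (hb : ∀ i, b i ∈ attainingExtremePoints T)
    (hJ : ∀ e ∈ attainingExtremePoints T, ∀ i, b.repr e i ≠ 0 →
      suppFunctionals (T e) ⊆ Submodule.span ℝ (suppFunctionals (T (b i)))) :
    smoothOrder T = ∑ i, smoothOrder (T (b i)) := by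
  rw [smoothOrder, span_suppFunctionals_eq_iSup_map_tensorFunctional hT b hb hJ]
  exact finrank_iSup_map_tensorFunctional b _

end Basis

section Counting

variable {X ι : Type*} [InvolutiveNeg X] {A B : Set X}

lemma encard_le_two_mul_encard_of_subset_iUnion_pair_neg {v : ι → X}
    (hA : A ⊆ ⋃ i, {v i, -v i}) (hneg : ∀ x ∈ A, -x ∈ A) :
    A.encard ≤ 2 * {i | v i ∈ A}.encard := by
  have hcover : A ⊆ v '' {i | v i ∈ A} ∪ (-v) '' {i | v i ∈ A} := by
    intro x hx
    obtain ⟨i, rfl | rfl⟩ := mem_iUnion.mp (hA hx)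
    · exact Or.inl (mem_image_of_mem v hx)
    · exact Or.inr ⟨i, by simpa using hneg _ hx, rfl⟩
  calc A.encard ≤ (v '' {i | v i ∈ A}).encard + ((-v) '' {i | v i ∈ A}).encard :=
        (encard_le_encard hcover).trans (encard_union_le _ _)
    _ ≤ 2 * {i | v i ∈ A}.encard :=
        (add_le_add (encard_image_le _ _) (encard_image_le _ _)).trans_eq (two_mul _).symm

lemma exists_mem_forall_ne_mem_of_two_mul_le_encard {n : ℕ} {v : Fin (n + 1) → X}
    (hA : A ⊆ ⋃ i, {v i, -v i}) (hB : B ⊆ ⋃ i, {v i, -v i})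
    (hAneg : ∀ x ∈ A, -x ∈ A) (hBneg : ∀ x ∈ B, -x ∈ B) (hAB : Disjoint A B)
    (hAne : A.Nonempty) (hBcard : 2 * (n : ℕ∞) ≤ B.encard) :
    ∃ i₀, v i₀ ∈ A ∧ ∀ i ≠ i₀, v i ∈ B := by
  obtain ⟨i₀, hi₀⟩ : ∃ i₀, v i₀ ∈ A := by
    obtain ⟨x, hx⟩ := hAne
    obtain ⟨i, rfl | rfl⟩ := mem_iUnion.mp (hA hx)
    · exact ⟨i, hx⟩
    · exact ⟨i, by simpa using hAneg _ hx⟩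
  have hsub : {i | v i ∈ B} ⊆ {i | i ≠ i₀} := by
    rintro i hi rfl
    exact disjoint_left.mp hAB hi₀ hi
  have hcard : {i | i ≠ i₀}.encard ≤ {i | v i ∈ B}.encard := by
    have hn : {i | i ≠ i₀}.encard = n :=
      ENat.add_left_injective_of_ne_top ENat.one_ne_top <|
        (encard_ne_add_one i₀).trans (by simp)
    rw [hn, ← ENat.mul_le_mul_left_iff two_ne_zero (ENat.ofNat_ne_top 2)]
    exact hBcard.trans (encard_le_two_mul_encard_of_subset_iUnion_pair_neg hB hBneg)
  have heq := (toFinite _).eq_of_subset_of_encard_le hsub hcard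
  exact ⟨i₀, hi₀, fun i hi ↦ heq.ge hi⟩

end Counting

theorem stmt_15_general {X Y : Type*} [NormedAddCommGroup X] [NormedSpace ℝ X]
    [FiniteDimensional ℝ X] [NormedAddCommGroup Y] [NormedSpace ℝ Y] [FiniteDimensional ℝ Y]
    {n k l : ℕ} (hX : finrank ℝ X = n) {v : Fin (n + 1) → X}
    (hv : ∀ i : Fin (n + 1), LinearIndependent ℝ (v ∘ i.succAbove))
    (T : X →L[ℝ] Y) (hT : ‖T‖ = 1) (hMT : attainingExtremePoints T ⊆ ⋃ i, {v i, -v i})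
    (hkl : l ≠ k) (hl : (smoothAttainingPoints T l).Nonempty)
    (hk : 2 * (n : ℕ∞) ≤ (smoothAttainingPoints T k).encard)
    (hJ : ∀ x ∈ smoothAttainingPoints T l, ∀ y ∈ smoothAttainingPoints T k,
      suppFunctionals (T x) ⊆ Submodule.span ℝ (suppFunctionals (T y))) :
    finrank ℝ (Submodule.span ℝ (suppFunctionals T)) = n * k := by
  obtain ⟨i₀, hi₀, hne⟩ := exists_mem_forall_ne_mem_of_two_mul_le_encard
    ((sep_subset _ _).trans hMT) ((sep_subset _ _).trans hMT)
    (fun _ ↦ neg_mem_smoothAttainingPoints) (fun _ ↦ neg_mem_smoothAttainingPoints)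
    (disjoint_smoothAttainingPoints hkl) hl hk
  let b : Basis (Fin n) ℝ X :=
    .mk (hv i₀) ((hv i₀).span_eq_top_of_card_eq_finrank' (by simp [hX])).ge
  have hb (j : Fin n) : b j = v (i₀.succAbove j) := Basis.mk_apply ..
  have hbk (j : Fin n) : b j ∈ smoothAttainingPoints T k :=
    hb j ▸ hne _ (i₀.succAbove_ne j)
  have hJb : ∀ e ∈ attainingExtremePoints T, ∀ j, b.repr e j ≠ 0 →
      suppFunctionals (T e) ⊆ Submodule.span ℝ (suppFunctionals (T (b j))) := by
    have hJv (i : Fin (n + 1)) (j : Fin n) (hij : b.repr (v i) j ≠ 0) :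
        suppFunctionals (T (v i)) ⊆ Submodule.span ℝ (suppFunctionals (T (b j))) := by
      obtain rfl | ⟨m, rfl⟩ := i₀.eq_self_or_eq_succAbove i
      · exact hJ _ hi₀ _ (hbk j)
      · rw [← hb, b.repr_self, Finsupp.single_apply_ne_zero] at hij
        rw [← hb, hij.1]
        exact Submodule.subset_span
    intro e he j hej
    obtain ⟨i, rfl | rfl⟩ := mem_iUnion.mp (hMT he)
    · exact hJv i j hej
    · rw [← Submodule.span_le, map_neg, span_suppFunctionals_neg, Submodule.span_le]
      exact hJv i j (by simpa using hej)
  calc smoothOrder T = ∑ j, smoothOrder (T (b j)) :=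
        smoothOrder_eq_sum_of_basis hT b (fun j ↦ (hbk j).1) hJb
    _ = n * k := by simp [fun j ↦ (hbk j).2]

section Cube

/-- One vertex from each antipodal pair of vertices of the unit ball of ℓ∞³. -/
def cubeVertex : Fin 4 → Linf3 := ![x₁, x₂, x₃, x₄]

lemma linearIndependent_cubeVertex_succAbove (i : Fin 4) :
    LinearIndependent ℝ (cubeVertex ∘ i.succAbove) := by
  suffices (Matrix.of (cubeVertex ∘ i.succAbove)).det ≠ 0 from
    Matrix.linearIndependent_rows_of_det_ne_zero this
  rw [Matrix.det_fin_three]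
  match i with
  | 0 | 1 | 2 | 3 =>
    simp [cubeVertex, Fin.succAbove, x₁, x₂, x₃, x₄]
    norm_num

lemma vertices_subset_iUnion_pair_neg_cubeVertex :
    {x₁, -x₁, x₂, -x₂, x₃, -x₃, x₄, -x₄} ⊆ ⋃ i, {cubeVertex i, -cubeVertex i} := by
  simp [insert_subset_iff, Fin.exists_fin_succ, cubeVertex]

end Cube

theorem stmt_15
    (T : Linf3 →L[ℝ] L13) (hT : ‖T‖ = 1)
    (hMT : MTExt T = {x₁, -x₁, x₂, -x₂, x₃, -x₃, x₄, -x₄})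
    (h1 : (Sk T 1).encard = 2) (h2 : (Sk T 2).encard = 6)
    (h3 : (Sk T 3).encard = 0)
    (hcap : 2 ≤ (⋂ x ∈ Sk T 2, pm (suppFunctionals (T x))).encard)
    (hJ' : ∀ xi ∈ Sk T 1, ∀ xk ∈ Sk T 2,
      pm (suppFunctionals (T xi)) ⊆ pm (extremePoints ℝ (suppFunctionals (T xk))))
    :
    finrank ℝ (Submodule.span ℝ (suppFunctionals T)) = 6 :=
  stmt_15_general (n := 3) (k := 2) (l := 1) (by simp) linearIndependent_cubeVertex_succAbove T hT
    (hMT.trans_subset vertices_subset_iUnion_pair_neg_cubeVertex) (by decide)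
    (encard_ne_zero.mp <| h1.trans_ne two_ne_zero) (h2.ge.trans' (by norm_num))
    fun xi hi xk hk ↦ subset_span_of_pm_subset_pm_extremePoints (hJ' xi hi xk hk)
end
end

section
/- Let X = ℓ∞³, Y = ℓ₁³, and let T : X → Y be a bounded linear operator with ‖T‖ = 1 such that M_T ∩ Ext(B_X) = {±x₁, ±x₂, ±x₃, ±x₄}. If |S₃| = 8, i.e., Tx is 3-smooth for every x ∈ M_T ∩ Ext(B_X), then T is 9-smooth, i.e., dim span J(T) = 9. -/
/-!
If `g` supports `T x` at a point `x` of the unit ball, then `A ↦ g (A x)` supports `T`. Where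
`J (T x)` spans the dual of `Y`, the span of `J T` therefore contains all functionals
`A ↦ g (A x)`. As `x` ranges over a basis of `X`, these span the dual of `L(X, Y)`, since
`A = ∑ i, b i* ⊗ A (b i)`. So `T` is `(dim X * dim Y)`-smooth as soon as such points span `X`; for
the cube, three vertices already do.
-/

open Metric Set Module Pointwise

noncomputable section

section FiniteDimensional

variable {𝕜 X Y ι : Type*} [NontriviallyNormedField 𝕜] [CompleteSpace 𝕜]
  [NormedAddCommGroup X] [NormedSpace 𝕜 X] [NormedAddCommGroup Y] [NormedSpace 𝕜 Y]

theorem finrank_continuousLinearMap [FiniteDimensional 𝕜 X] :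
    finrank 𝕜 (X →L[𝕜] Y) = finrank 𝕜 X * finrank 𝕜 Y := by
  rw [← (LinearMap.toContinuousLinearMap (𝕜 := 𝕜) (E := X) (F' := Y)).finrank_eq,
    finrank_linearMap]

theorem sum_coord_smulRight_apply [Fintype ι] [FiniteDimensional 𝕜 X] (b : Basis ι 𝕜 X)
    (A : X →L[𝕜] Y) :
    ∑ i, (b.coord i).toContinuousLinearMap.smulRight (A (b i)) = A := by
  ext x
  calc (∑ i, (b.coord i).toContinuousLinearMap.smulRight (A (b i))) x
      = A (∑ i, b.repr x i • b i) := by simp [-Basis.sum_repr]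
    _ = A x := by rw [b.sum_repr]

theorem eq_sum_comp_apply_basis [Fintype ι] [FiniteDimensional 𝕜 X] (b : Basis ι 𝕜 X)
    (F : (X →L[𝕜] Y) →L[𝕜] 𝕜) :
    F = ∑ i, (F ∘L ContinuousLinearMap.smulRightL 𝕜 X Y (b.coord i).toContinuousLinearMap) ∘L
      ContinuousLinearMap.apply 𝕜 Y (b i) := by
  ext A
  conv_lhs => rw [← sum_coord_smulRight_apply b A, map_sum]
  simp

end FiniteDimensional

section SupportingFunctionals

variable {X Y : Type*} [NormedAddCommGroup X] [NormedSpace ℝ X]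
  [NormedAddCommGroup Y] [NormedSpace ℝ Y] {T : X →L[ℝ] Y} {x : X}

theorem comp_apply_mem_suppFunctionals (hT : ‖T‖ ≤ 1) (hx : ‖x‖ ≤ 1) {g : Y →L[ℝ] ℝ}
    (hg : g ∈ suppFunctionals (T x)) :
    g ∘L ContinuousLinearMap.apply ℝ Y x ∈ suppFunctionals T := by
  obtain ⟨hg_norm, hg_apply⟩ := hg
  refine ⟨le_antisymm ?_ ?_, hg_apply⟩
  · refine ContinuousLinearMap.opNorm_le_bound _ zero_le_one fun A => ?_
    calc ‖g (A x)‖ ≤ ‖g‖ * (‖A‖ * ‖x‖) := g.le_opNorm_of_le (A.le_opNorm x)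
      _ ≤ 1 * (‖A‖ * 1) := by rw [hg_norm]; gcongr
      _ = 1 * ‖A‖ := by rw [mul_one]
  · calc (1 : ℝ) = ‖(g ∘L ContinuousLinearMap.apply ℝ Y x) T‖ := by
          simp [hg_apply]
      _ ≤ ‖g ∘L ContinuousLinearMap.apply ℝ Y x‖ :=
          ContinuousLinearMap.unit_le_opNorm _ T hT

theorem comp_apply_mem_span_suppFunctionals (hT : ‖T‖ ≤ 1) (hx : ‖x‖ ≤ 1) {g : Y →L[ℝ] ℝ}
    (hg : g ∈ Submodule.span ℝ (suppFunctionals (T x))) :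
    g ∘L ContinuousLinearMap.apply ℝ Y x ∈ Submodule.span ℝ (suppFunctionals T) := by
  have hle : Submodule.span ℝ (suppFunctionals (T x)) ≤
      (Submodule.span ℝ (suppFunctionals T)).comap
        ((ContinuousLinearMap.apply ℝ Y x).precomp ℝ).toLinearMap :=
    Submodule.span_le.2 fun _ hf =>
      Submodule.subset_span (comp_apply_mem_suppFunctionals hT hx hf)
  exact hle hg

theorem span_suppFunctionals_eq_top_of_span_eq_top [FiniteDimensional ℝ X] (hT : ‖T‖ ≤ 1)
    {S : Set X} (hS : S ⊆ closedBall 0 1) (hspan : Submodule.span ℝ S = ⊤)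
    (hsupp : ∀ x ∈ S, Submodule.span ℝ (suppFunctionals (T x)) = ⊤) :
    Submodule.span ℝ (suppFunctionals T) = ⊤ := by
  let b := Basis.ofSpan hspan.ge
  have hb (i) : b i ∈ S := Basis.ofSpan_subset hspan.ge (mem_range_self i)
  have := FiniteDimensional.fintypeBasisIndex b
  refine Submodule.eq_top_iff'.2 fun F => ?_
  rw [eq_sum_comp_apply_basis b F]
  refine Submodule.sum_mem _ fun i _ => comp_apply_mem_span_suppFunctionals hT ?_ ?_
  · exact mem_closedBall_zero_iff.1 (hS (hb i))
  · exact hsupp _ (hb i) ▸ Submodule.mem_top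

theorem span_suppFunctionals_eq_top_of_finrank_eq [FiniteDimensional ℝ Y] {y : Y}
    (hy : finrank ℝ (Submodule.span ℝ (suppFunctionals y)) = finrank ℝ Y) :
    Submodule.span ℝ (suppFunctionals y) = ⊤ := by
  have hdual : finrank ℝ (Y →L[ℝ] ℝ) = finrank ℝ Y := by
    rw [finrank_continuousLinearMap, finrank_self, mul_one]
  exact Submodule.eq_top_of_finrank_eq (hy.trans hdual.symm)

theorem stmt_19_general [FiniteDimensional ℝ X] [FiniteDimensional ℝ Y] (hT : ‖T‖ ≤ 1)
    {S : Set X} (hS : S ⊆ closedBall 0 1) (hspan : Submodule.span ℝ S = ⊤)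
    (hsmooth : ∀ x ∈ S, finrank ℝ (Submodule.span ℝ (suppFunctionals (T x))) = finrank ℝ Y) :
    finrank ℝ (Submodule.span ℝ (suppFunctionals T)) = finrank ℝ X * finrank ℝ Y := by
  have htop : Submodule.span ℝ (suppFunctionals T) = ⊤ :=
    span_suppFunctionals_eq_top_of_span_eq_top hT hS hspan fun x hx =>
      span_suppFunctionals_eq_top_of_finrank_eq (hsmooth x hx)
  rw [htop, finrank_top, finrank_continuousLinearMap, finrank_continuousLinearMap, finrank_self,
    mul_one]

end SupportingFunctionals

theorem span_x₁_x₂_x₃ : Submodule.span ℝ {x₁, x₂, x₃} = ⊤ := by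
  refine Submodule.eq_top_iff'.2 fun v => Submodule.mem_span_triple.2
    ⟨(v 0 + v 2) / 2, (v 1 - v 0) / 2, (v 2 - v 1) / 2, ?_⟩
  ext i
  fin_cases i <;> simp [x₁, x₂, x₃] <;> ring

theorem Sk_subset_closedBall (T : Linf3 →L[ℝ] L13) (k : ℕ) : Sk T k ⊆ closedBall 0 1 :=
  fun _ hx => sphere_subset_closedBall hx.1.1.1

theorem Sk_eq_MTExt_of_encard_eq_eight {T : Linf3 →L[ℝ] L13} {k : ℕ}
    (hMT : MTExt T = {x₁, -x₁, x₂, -x₂, x₃, -x₃, x₄, -x₄}) (hk : (Sk T k).encard = 8) :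
    Sk T k = MTExt T := by
  have hfin : (MTExt T).Finite := hMT ▸ toFinite _
  have hcard : (MTExt T).encard ≤ 8 := by
    rw [hMT]
    grw [encard_insert_le, encard_insert_le, encard_insert_le, encard_insert_le,
      encard_insert_le, encard_insert_le, encard_insert_le, encard_singleton]
    norm_num
  exact hfin.eq_of_subset_of_encard_le' (sep_subset _ _) (hk ▸ hcard)

theorem span_Sk_eq_top_of_encard_eq_eight {T : Linf3 →L[ℝ] L13} {k : ℕ}
    (hMT : MTExt T = {x₁, -x₁, x₂, -x₂, x₃, -x₃, x₄, -x₄}) (hk : (Sk T k).encard = 8) :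
    Submodule.span ℝ (Sk T k) = ⊤ := by
  refine top_unique (span_x₁_x₂_x₃.ge.trans (Submodule.span_mono ?_))
  rw [Sk_eq_MTExt_of_encard_eq_eight hMT hk, hMT]
  grind

theorem finrank_L13 : finrank ℝ L13 = 3 := by
  rw [(WithLp.linearEquiv 1 ℝ Linf3).finrank_eq, finrank_fin_fun]

theorem stmt_19
    (T : Linf3 →L[ℝ] L13) (hT : ‖T‖ = 1)
    (hMT : MTExt T = {x₁, -x₁, x₂, -x₂, x₃, -x₃, x₄, -x₄})
    (h3 : (Sk T 3).encard = 8)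
    :
    finrank ℝ (Submodule.span ℝ (suppFunctionals T)) = 9 := by
  simpa [finrank_L13] using stmt_19_general hT.le (Sk_subset_closedBall T 3)
    (span_Sk_eq_top_of_encard_eq_eight hMT h3) fun x hx => hx.2.trans finrank_L13.symm
end
end
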